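/- For the norm ‖·‖_P on H = {x ∈ ℝ^{n+1} : Σx_i = 0} whose unit ball is the Voronoï region of A_n, m₁(H, ‖·‖_P) = 1/2ⁿ for all n ≥ 2. -/

import Mathlib

open MeasureTheory Filter Set Pointwise

noncomputable def box (n : ℕ) (R : ℝ) : Set (Fin n → ℝ) := {x | ∀ i, |x i| ≤ R}

noncomputable def density (n : ℕ) (A : Set (Fin n → ℝ)) : ℝ :=
  Filter.limsup (fun R : ℝ =>
    (volume (A ∩ box n R)).toReal / (volume (box n R)).toReal) Filter.atTop

def AvoidsOne (n : ℕ) (N : (Fin n → ℝ) → ℝ) (A : Set (Fin n → ℝ)) : Prop :=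
  ∀ x ∈ A, ∀ y ∈ A, N (x - y) ≠ 1

noncomputable def m1 (n : ℕ) (N : (Fin n → ℝ) → ℝ) : ℝ :=
  sSup {d : ℝ | ∃ A : Set (Fin n → ℝ), MeasurableSet A ∧ AvoidsOne n N A ∧ d = density n A}

noncomputable def polyNorm (n : ℕ) (P : Set (Fin n → ℝ)) (x : Fin n → ℝ) : ℝ :=
  sInf {l : ℝ | 0 ≤ l ∧ x ∈ l • P}

def IsSymmPolytope (n : ℕ) (P : Set (Fin n → ℝ)) : Prop :=
  Convex ℝ P ∧ (∀ x ∈ P, -x ∈ P) ∧ ∃ F : Finset (Fin n → ℝ), P = convexHull ℝ (↑F : Set (Fin n → ℝ))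

def TilesBy (n : ℕ) (P : Set (Fin n → ℝ)) (Λ : Set (Fin n → ℝ)) : Prop :=
  (⋃ l ∈ Λ, (l +ᵥ P)) = Set.univ ∧
  (Λ.Pairwise fun a b => interior (a +ᵥ P) ∩ interior (b +ᵥ P) = ∅)

/-- The hyperplane `H = {x ∈ ℝ^{n+1} : ∑ xᵢ = 0}`. -/
def Hset (n : ℕ) : Set (Fin (n + 1) → ℝ) := {x | ∑ i, x i = 0}

/-!
Write `P` for the Voronoï region of `Aₙ`; the norm with unit ball `P` is the oscillation
`max - min` of the coordinates.

*Lower bound.* Distinct points of `Aₙ` are at distance at least `2`, so the union of the translates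
of `½ P°` by `Aₙ` avoids distance `1`. Its translates by `½ Aₙ` cover almost every point, and there
are only `2ⁿ` of them because `Aₙ / 2Aₙ` has `2ⁿ` elements.

*Upper bound.* Let `v₀, …, vₙ` be the projections to `H` of the vectors `½ eᵢ`; they sum to zero.
For incomparable `U` and `V`, the vectors `∑_{i ∈ U} vᵢ` and `∑_{i ∈ V} vᵢ` are at distance `1`, so
if `A` avoids distance `1`, the sets `U` with `x ∈ ∑_{i ∈ U} vᵢ + A` form a chain for every `x`.
Hence the nonempty `V` with `a + ∑_{i ∈ V} vᵢ ∈ A` have a common element `b` for every `a ∈ A`. Let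
`A_b` be the set of points with common element `b`, made disjoint for distinct `b`. The translates
of `A_b` by `∑_{i ∈ U} vᵢ`, for all `b` and the `2ⁿ` sets `U` not containing `b`, are pairwise
disjoint, so `2ⁿ` times the density of `A` is at most `1`.
-/

open scoped Topology

/-! ### The oscillation seminorm -/

section Osc

variable {ι : Type*}

/-- The oscillation `max v - min v` of a finite family of reals. On the hyperplane `∑ vᵢ = 0` it is
the norm whose unit ball is the Voronoï region of the root lattice `Aₙ`. -/
noncomputable def osc (v : ι → ℝ) : ℝ := (⨆ i, v i) - ⨅ i, v i

theorem sub_le_osc [Finite ι] (v : ι → ℝ) (i j : ι) : v i - v j ≤ osc v :=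
  sub_le_sub (le_ciSup (finite_range v).bddAbove i) (ciInf_le (finite_range v).bddBelow j)

theorem osc_const_smul {c : ℝ} (hc : 0 ≤ c) (v : ι → ℝ) : osc (c • v) = c * osc v := by
  simp only [osc, Pi.smul_apply, smul_eq_mul, mul_sub, Real.mul_iSup_of_nonneg hc,
    Real.mul_iInf_of_nonneg hc]

theorem measurable_osc [Finite ι] : Measurable (osc : (ι → ℝ) → ℝ) :=
  (Measurable.iSup measurable_pi_apply).sub (Measurable.iInf measurable_pi_apply)

variable [Finite ι] [Nonempty ι]

theorem exists_sub_eq_osc (v : ι → ℝ) : ∃ i j, v i - v j = osc v := by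
  obtain ⟨i, hi⟩ := exists_eq_ciSup_of_finite (f := v)
  obtain ⟨j, hj⟩ := exists_eq_ciInf_of_finite (f := v)
  exact ⟨i, j, by rw [osc, hi, hj]⟩

theorem osc_le_iff {v : ι → ℝ} {r : ℝ} : osc v ≤ r ↔ ∀ i j, v i - v j ≤ r := by
  refine ⟨fun h i j ↦ (sub_le_osc v i j).trans h, fun h ↦ ?_⟩
  obtain ⟨i, j, hij⟩ := exists_sub_eq_osc v
  exact hij ▸ h i j

theorem osc_sub_le (v w : ι → ℝ) : osc (v - w) ≤ osc v + osc w := by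
  refine osc_le_iff.2 fun i j ↦ ?_
  have hv := sub_le_osc v i j
  have hw := sub_le_osc w j i
  simp only [Pi.sub_apply]
  linarith

theorem osc_half_indicator_sub_eq_one [DecidableEq ι] {U V : Finset ι} (hUV : ¬U ⊆ V)
    (hVU : ¬V ⊆ U) (c : ℝ) :
    osc (fun i ↦ (if i ∈ U then 1 / 2 else 0) - (if i ∈ V then 1 / 2 else 0) + c) = 1 := by
  obtain ⟨i, hiU, hiV⟩ := Finset.not_subset.1 hUV
  obtain ⟨j, hjV, hjU⟩ := Finset.not_subset.1 hVU
  refine le_antisymm (osc_le_iff.2 fun k l ↦ ?_) (le_of_eq_of_le ?_ (sub_le_osc _ i j))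
  · split_ifs <;> linarith
  · simp only [hiU, hiV, hjU, hjV, if_true, if_false]
    norm_num

end Osc

/-! ### Lattice points near a point of the hyperplane -/

section Lattice

variable {ι : Type*} [Fintype ι]

theorem two_le_osc_intCast {l : ι → ℤ} (hsum : ∑ i, l i = 0) (hl : l ≠ 0) :
    2 ≤ osc (fun i ↦ (l i : ℝ)) := by
  obtain ⟨k, hk⟩ := Function.ne_iff.1 hl
  obtain ⟨i, -, hi⟩ := Finset.exists_pos_of_sum_zero_of_exists_nonzero l hsum ⟨k, by simp, hk⟩
  obtain ⟨j, -, hj⟩ := Finset.exists_pos_of_sum_zero_of_exists_nonzero (-l)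
    (by simpa using hsum) ⟨k, by simp, by simpa using hk⟩
  have hij : 2 ≤ l i - l j := by
    rw [Pi.neg_apply] at hj
    omega
  calc (2 : ℝ) ≤ l i - l j := by exact_mod_cast hij
    _ ≤ osc (fun i ↦ (l i : ℝ)) := sub_le_osc (fun i ↦ (l i : ℝ)) i j

theorem exists_finset_card_eq_forall_notMem_le {α : Type*} [LinearOrder α] (f : ι → α) {k : ℕ}
    (hk : k ≤ Fintype.card ι) :
    ∃ U : Finset ι, U.card = k ∧ ∀ i ∈ U, ∀ j ∉ U, f j ≤ f i := by
  classical
  induction k with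
  | zero => exact ⟨∅, by simp⟩
  | succ k ih =>
    obtain ⟨U, hcard, hU⟩ := ih (by omega)
    have hne : Uᶜ.Nonempty := by
      rw [← Finset.card_pos, Finset.card_compl]
      omega
    obtain ⟨a, ha, hmax⟩ := Finset.exists_max_image Uᶜ f hne
    rw [Finset.mem_compl] at ha
    refine ⟨insert a U, by rw [Finset.card_insert_of_notMem ha, hcard], fun i hi j hj ↦ ?_⟩
    rw [Finset.mem_insert, not_or] at hj
    rcases Finset.mem_insert.1 hi with rfl | hi
    · exact hmax j (Finset.mem_compl.2 hj.2)
    · exact hU i hi j hj.2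

theorem exists_sum_floor_eq_neg {y : ι → ℝ} (hy : ∑ i, y i = 0) :
    ∃ k : ℕ, k ≤ Fintype.card ι ∧ ∑ i, ⌊y i⌋ = -k := by
  have hfract : ((-∑ i, ⌊y i⌋ : ℤ) : ℝ) = ∑ i, Int.fract (y i) := by
    simp only [Int.fract, Finset.sum_sub_distrib, hy]
    push_cast
    ring
  have hnonneg : 0 ≤ -∑ i, ⌊y i⌋ := by
    rw [← Int.cast_nonneg_iff (R := ℝ), hfract]
    exact Finset.sum_nonneg fun i _ ↦ Int.fract_nonneg (y i)
  have hle : -∑ i, ⌊y i⌋ ≤ Fintype.card ι := by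
    rw [← Int.cast_le (R := ℝ), hfract]
    simpa using Finset.sum_le_sum fun i (_ : i ∈ Finset.univ) ↦ (Int.fract_lt_one (y i)).le
  exact ⟨(-∑ i, ⌊y i⌋).toNat, by omega, by omega⟩

-- Rounding down all coordinates but those with the largest fractional parts keeps the sum zero.
theorem exists_int_osc_sub_le_one [Nonempty ι] {y : ι → ℝ} (hy : ∑ i, y i = 0) :
    ∃ l : ι → ℤ, ∑ i, l i = 0 ∧ osc (y - fun i ↦ (l i : ℝ)) ≤ 1 := by
  classical
  obtain ⟨k, hk, hfloor⟩ := exists_sum_floor_eq_neg hy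
  obtain ⟨U, hcard, hU⟩ :=
    exists_finset_card_eq_forall_notMem_le (fun i ↦ Int.fract (y i)) hk
  refine ⟨fun i ↦ ⌊y i⌋ + if i ∈ U then 1 else 0, ?_, osc_le_iff.2 fun i j ↦ ?_⟩
  · simp [Finset.sum_add_distrib, hfloor, hcard]
  · have hi_lt := Int.fract_lt_one (y i)
    have hj_nonneg := Int.fract_nonneg (y j)
    have hfract (m : ι) : y m - ⌊y m⌋ = Int.fract (y m) := rfl
    simp only [Pi.sub_apply, Int.cast_add, ← sub_sub, hfract]
    by_cases hi : i ∈ U <;> by_cases hj : j ∈ U <;> simp only [hi, hj, if_true, if_false] <;>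
      push_cast
    · linarith
    · linarith
    · linarith [hU j hj i hi]
    · linarith

/-- The union of the translates of `½ P°` by the lattice `Aₙ`, where `P` is the Voronoï region. It
is a subset of the ambient `ℝⁿ⁺¹`, invariant under adding constant vectors. -/
def halfCells (ι : Type*) [Fintype ι] : Set (ι → ℝ) :=
  {y | ∃ l : ι → ℤ, ∑ i, l i = 0 ∧ osc (y - fun i ↦ (l i : ℝ)) < 1 / 2}

theorem measurableSet_halfCells : MeasurableSet (halfCells ι) := by
  have heq : halfCells ι = ⋃ (l : ι → ℤ) (_ : ∑ i, l i = 0),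
      (fun y ↦ osc (y - fun i ↦ (l i : ℝ))) ⁻¹' Iio (1 / 2) := by
    ext y
    simp [halfCells]
  rw [heq]
  exact .iUnion fun l ↦ .iUnion fun _ ↦
    (measurable_osc.comp (measurable_id.sub_const _)) measurableSet_Iio

variable [Nonempty ι]

-- Two points in the same cell are at distance `< ½ + ½`; two points in distinct cells are at
-- distance `> 2 - ½ - ½`.
theorem osc_sub_ne_one_of_mem_halfCells {y z : ι → ℝ} (hy : y ∈ halfCells ι)
    (hz : z ∈ halfCells ι) : osc (y - z) ≠ 1 := by
  obtain ⟨l, hl, hyl⟩ := hy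
  obtain ⟨m, hm, hzm⟩ := hz
  set p := y - fun i ↦ (l i : ℝ) with hp
  set q := z - fun i ↦ (m i : ℝ) with hq
  have hpq : osc (p - q) < 1 := by linarith [osc_sub_le p q]
  rcases eq_or_ne l m with rfl | hlm
  · rw [hp, hq, sub_sub_sub_cancel_right] at hpq
    exact hpq.ne
  · have hsum : ∑ i, (l - m) i = 0 := by simp [Finset.sum_sub_distrib, hl, hm]
    have hcast : (fun i ↦ (((l - m) i : ℤ) : ℝ)) = (y - z) - (p - q) := by
      ext i
      simp only [hp, hq, Pi.sub_apply, Int.cast_sub]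
      ring
    have htwo := two_le_osc_intCast hsum (sub_ne_zero.2 hlm)
    rw [hcast] at htwo
    exact ne_of_gt (by linarith [osc_sub_le (y - z) (p - q)])

end Lattice

section Parity

variable {n : ℕ}

/-- Representatives, indexed by the subsets of `Fin n`, of the `2ⁿ` classes of `Aₙ / 2Aₙ`; the first
coordinate makes the sum vanish. -/
def parityVec (U : Finset (Fin n)) : Fin (n + 1) → ℤ :=
  Fin.cons (-(U.card : ℤ)) fun i ↦ if i ∈ U then 1 else 0

theorem sum_parityVec (U : Finset (Fin n)) : ∑ i, parityVec U i = 0 := by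
  simp [parityVec, Fin.sum_univ_succ]

theorem exists_eq_parityVec_add_two_mul {l : Fin (n + 1) → ℤ} (hl : ∑ i, l i = 0) :
    ∃ U : Finset (Fin n), ∃ m : Fin (n + 1) → ℤ,
      ∑ i, m i = 0 ∧ ∀ i, l i = parityVec U i + 2 * m i := by
  let U : Finset (Fin n) := Finset.univ.filter fun i ↦ l i.succ % 2 = 1
  let m : Fin (n + 1) → ℤ := Fin.cons (-∑ i : Fin n, l i.succ / 2) fun i ↦ l i.succ / 2
  have hm : ∑ i, m i = 0 := by simp [m, Fin.sum_univ_succ]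
  have hsucc (i : Fin n) : l i.succ = parityVec U i.succ + 2 * m i.succ := by
    simp only [parityVec, m, U, Fin.cons_succ, Finset.mem_filter, Finset.mem_univ, true_and]
    split_ifs <;> omega
  have hzero : l 0 = parityVec U 0 + 2 * m 0 := by
    have hU := sum_parityVec U
    have htail : ∑ i : Fin n, l i.succ
        = ∑ i : Fin n, parityVec U i.succ + 2 * ∑ i : Fin n, m i.succ := by
      simp only [hsucc, Finset.sum_add_distrib, Finset.mul_sum]
    rw [Fin.sum_univ_succ] at hl hU hm
    linarith
  exact ⟨U, m, hm, Fin.cases hzero hsucc⟩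

-- Half of a lattice point close to `2 • y` is a lattice point plus half of a `parityVec`.
-- Genericity of `y` excludes the boundary of the cell.
theorem exists_sub_half_parityVec_mem_halfCells {y : Fin (n + 1) → ℝ} (hy : ∑ i, y i = 0)
    (hgen : ∀ i j, i ≠ j → 2 * (y i - y j) ∉ range ((↑) : ℤ → ℝ)) :
    ∃ U : Finset (Fin n),
      y - (1 / 2 : ℝ) • (fun i ↦ (parityVec U i : ℝ)) ∈ halfCells (Fin (n + 1)) := by
  obtain ⟨l, hl, hosc⟩ :=
    exists_int_osc_sub_le_one (y := (2 : ℝ) • y) (by simp [← Finset.mul_sum, hy])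
  obtain ⟨U, m, hm, hlm⟩ := exists_eq_parityVec_add_two_mul hl
  have hlt : osc ((2 : ℝ) • y - fun i ↦ (l i : ℝ)) < 1 := by
    obtain ⟨i, j, hij⟩ := exists_sub_eq_osc ((2 : ℝ) • y - fun i ↦ (l i : ℝ))
    refine lt_of_le_of_ne hosc fun hone ↦ ?_
    rw [hone] at hij
    simp only [Pi.sub_apply, Pi.smul_apply, smul_eq_mul] at hij
    refine hgen i j ?_ ⟨1 + l i - l j, ?_⟩
    · rintro rfl
      norm_num at hij
    · push_cast
      linarith
  have hhalf : y - (1 / 2 : ℝ) • (fun i ↦ (parityVec U i : ℝ)) - (fun i ↦ (m i : ℝ))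
      = (1 / 2 : ℝ) • ((2 : ℝ) • y - fun i ↦ (l i : ℝ)) := by
    ext i
    simp only [Pi.sub_apply, Pi.smul_apply, smul_eq_mul, hlm]
    push_cast
    ring
  refine ⟨U, m, hm, ?_⟩
  rw [hhalf, osc_const_smul (by norm_num)]
  linarith

end Parity

/-! ### Density of subsets of `ℝⁿ` -/

section Density

variable {n : ℕ}

theorem box_eq_closedBall {R : ℝ} (hR : 0 ≤ R) : box n R = Metric.closedBall 0 R := by
  ext x
  simp [box, pi_norm_le_iff_of_nonneg hR]

theorem measurableSet_box (R : ℝ) : MeasurableSet (box n R) := by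
  simp only [box, ofPred_forall]
  exact .iInter fun i ↦ measurableSet_le (measurable_pi_apply i).abs measurable_const

theorem volume_box {R : ℝ} (hR : 0 ≤ R) : volume (box n R) = ENNReal.ofReal ((2 * R) ^ n) := by
  rw [box_eq_closedBall hR, Real.volume_pi_closedBall _ hR, Fintype.card_fin]

theorem volume_box_ne_top {R : ℝ} (hR : 0 ≤ R) : volume (box n R) ≠ ⊤ :=
  volume_box hR ▸ ENNReal.ofReal_ne_top

theorem measureReal_box {R : ℝ} (hR : 0 ≤ R) : volume.real (box n R) = (2 * R) ^ n := by
  rw [measureReal_def, volume_box hR, ENNReal.toReal_ofReal (by positivity)]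

/-- The uniform probability measure on `box n R`; `density n A` is the upper limit of the masses it
gives to `A` as `R → ∞`. -/
noncomputable def boxMeasure (n : ℕ) (R : ℝ) : Measure (Fin n → ℝ) :=
  ProbabilityTheory.cond volume (box n R)

instance (R : ℝ) : IsZeroOrProbabilityMeasure (boxMeasure n R) := by
  unfold boxMeasure
  infer_instance

theorem isProbabilityMeasure_boxMeasure {R : ℝ} (hR : 0 < R) :
    IsProbabilityMeasure (boxMeasure n R) :=
  ProbabilityTheory.cond_isProbabilityMeasure_of_finite
    (by rw [volume_box hR.le]; positivity) (volume_box_ne_top hR.le)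

theorem boxMeasure_real_apply (R : ℝ) (A : Set (Fin n → ℝ)) :
    (boxMeasure n R).real A = volume.real (A ∩ box n R) / volume.real (box n R) := by
  rw [boxMeasure, measureReal_def, ProbabilityTheory.cond_apply (measurableSet_box R),
    ENNReal.toReal_mul, ENNReal.toReal_inv, inter_comm, inv_mul_eq_div, measureReal_def,
    measureReal_def]

theorem density_eq_limsup_boxMeasure (A : Set (Fin n → ℝ)) :
    density n A = limsup (fun R ↦ (boxMeasure n R).real A) atTop := by
  simp only [boxMeasure_real_apply, density, ← measureReal_def]

theorem density_le_of_tendsto {A : Set (Fin n → ℝ)} {f : ℝ → ℝ} {d : ℝ}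
    (hf : Tendsto f atTop (𝓝 d)) (hA : ∀ᶠ R in atTop, (boxMeasure n R).real A ≤ f R) :
    density n A ≤ d := by
  rw [density_eq_limsup_boxMeasure, ← hf.limsup_eq]
  exact limsup_le_limsup hA
    (isCoboundedUnder_le_of_le (x := 0) atTop fun _ ↦ measureReal_nonneg) hf.isBoundedUnder_le

theorem le_density_of_tendsto {A : Set (Fin n → ℝ)} {f : ℝ → ℝ} {d : ℝ}
    (hf : Tendsto f atTop (𝓝 d)) (hA : ∀ᶠ R in atTop, f R ≤ (boxMeasure n R).real A) :
    d ≤ density n A := by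
  rw [density_eq_limsup_boxMeasure, ← hf.limsup_eq]
  exact limsup_le_limsup hA hf.isCoboundedUnder_le
    (isBoundedUnder_of ⟨1, fun _ ↦ measureReal_le_one⟩)

theorem box_subset_box {R S : ℝ} (h : R ≤ S) : box n R ⊆ box n S :=
  fun _ hx i ↦ (hx i).trans h

theorem add_mem_box {R c : ℝ} {x y : Fin n → ℝ} (hx : x ∈ box n R) (hy : ‖y‖ ≤ c) :
    x + y ∈ box n (R + c) := fun i ↦
  (abs_add_le (x i) (y i)).trans (add_le_add (hx i) ((norm_le_pi_norm y i).trans hy))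

theorem measureReal_vadd_inter_box_le (A : Set (Fin n → ℝ)) (t : Fin n → ℝ) {R : ℝ} (hR : 0 ≤ R) :
    volume.real ((t +ᵥ A) ∩ box n R)
      ≤ volume.real (A ∩ box n R) + ((2 * (R + ‖t‖)) ^ n - (2 * R) ^ n) := by
  have hS : 0 ≤ R + ‖t‖ := by positivity
  have hRtop := volume_box_ne_top (n := n) hR
  have hStop := volume_box_ne_top (n := n) hS
  have htranslate : (t +ᵥ A) ∩ box n R ⊆ t +ᵥ (A ∩ box n (R + ‖t‖)) := by
    rintro _ ⟨⟨a, ha, rfl⟩, hbox⟩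
    refine vadd_mem_vadd_set ⟨ha, ?_⟩
    simpa using add_mem_box hbox (norm_neg t).le
  have hshell : A ∩ box n (R + ‖t‖) ⊆ (A ∩ box n R) ∪ (box n (R + ‖t‖) \ box n R) := by
    rintro x ⟨hxA, hx⟩
    by_cases hxR : x ∈ box n R
    · exact .inl ⟨hxA, hxR⟩
    · exact .inr ⟨hx, hxR⟩
  calc volume.real ((t +ᵥ A) ∩ box n R)
      ≤ volume.real (t +ᵥ (A ∩ box n (R + ‖t‖))) :=
        measureReal_mono htranslate
          (by rw [measure_vadd]; exact measure_ne_top_of_subset inter_subset_right hStop)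
    _ = volume.real (A ∩ box n (R + ‖t‖)) := by simp only [measureReal_def, measure_vadd]
    _ ≤ volume.real (A ∩ box n R) + volume.real (box n (R + ‖t‖) \ box n R) :=
        (measureReal_mono hshell (measure_union_ne_top
          (measure_ne_top_of_subset inter_subset_right hRtop)
          (measure_ne_top_of_subset sdiff_subset hStop))).trans (measureReal_union_le _ _)
    _ = volume.real (A ∩ box n R) + ((2 * (R + ‖t‖)) ^ n - (2 * R) ^ n) := by
        rw [measureReal_sdiff (box_subset_box (by simp)) (measurableSet_box R) hStop,
          measureReal_box hS, measureReal_box hR]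

theorem boxMeasure_real_vadd_le (A : Set (Fin n → ℝ)) (t : Fin n → ℝ) {R : ℝ} (hR : 0 < R) :
    (boxMeasure n R).real (t +ᵥ A)
      ≤ (boxMeasure n R).real A + (((R + ‖t‖) / R) ^ n - 1) := by
  have hvol : 0 < (2 * R) ^ n := by positivity
  have hratio : ((R + ‖t‖) / R) ^ n - 1
      = ((2 * (R + ‖t‖)) ^ n - (2 * R) ^ n) / (2 * R) ^ n := by
    rw [sub_div, div_self hvol.ne', ← div_pow, mul_div_mul_left _ _ two_ne_zero]
  rw [boxMeasure_real_apply, boxMeasure_real_apply, measureReal_box hR.le, hratio, ← add_div]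
  exact div_le_div_of_nonneg_right (measureReal_vadd_inter_box_le A t hR.le) hvol.le

theorem tendsto_boxMeasure_real_vadd_sub (A : Set (Fin n → ℝ)) (t : Fin n → ℝ) :
    Tendsto (fun R ↦ (boxMeasure n R).real (t +ᵥ A) - (boxMeasure n R).real A) atTop (𝓝 0) := by
  have hlim : Tendsto (fun R : ℝ ↦ ((R + ‖t‖) / R) ^ n - 1) atTop (𝓝 0) := by
    have hone : Tendsto (fun R : ℝ ↦ 1 + ‖t‖ / R) atTop (𝓝 1) := by
      simpa using (tendsto_const_nhds (x := (1 : ℝ))).add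
        ((tendsto_const_nhds (x := ‖t‖)).div_atTop tendsto_id)
    have hpow : Tendsto (fun R : ℝ ↦ (1 + ‖t‖ / R) ^ n - 1) atTop (𝓝 0) := by
      simpa using (hone.pow n).sub_const 1
    refine hpow.congr' ?_
    filter_upwards [eventually_gt_atTop 0] with R hR
    rw [add_div, div_self hR.ne']
  refine squeeze_zero_norm' ?_ hlim
  filter_upwards [eventually_gt_atTop 0] with R hR
  have hle := boxMeasure_real_vadd_le A t hR
  have hge := boxMeasure_real_vadd_le (t +ᵥ A) (-t) hR
  rw [neg_vadd_vadd, norm_neg] at hge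
  rw [Real.norm_eq_abs, abs_le]
  constructor <;> linarith

theorem tendsto_sum_boxMeasure_real_vadd_sub {κ : Type*} (s : Finset κ)
    (A : κ → Set (Fin n → ℝ)) (t : κ → Fin n → ℝ) :
    Tendsto (fun R ↦ ∑ k ∈ s, ((boxMeasure n R).real (t k +ᵥ A k) - (boxMeasure n R).real (A k)))
      atTop (𝓝 0) := by
  simpa only [Finset.sum_const_zero] using
    tendsto_finsetSum s fun k _ ↦ tendsto_boxMeasure_real_vadd_sub (A k) (t k)

theorem density_iUnion_le_one_div_of_pairwiseDisjoint {ι κ : Type*} [Fintype ι]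
    {B : ι → Set (Fin n → ℝ)} (hB : ∀ i, MeasurableSet (B i)) (t : κ → Fin n → ℝ)
    {K : ι → Finset κ} {m : ℕ} (hm : 0 < m) (hK : ∀ i, (K i).card = m)
    (hdisj : (Finset.univ.sigma K : Set (Σ _ : ι, κ)).PairwiseDisjoint
      fun p ↦ t p.2 +ᵥ B p.1) :
    density n (⋃ i, B i) ≤ 1 / m := by
  let err (R : ℝ) : ℝ := ∑ p ∈ Finset.univ.sigma K,
    ((boxMeasure n R).real (t p.2 +ᵥ B p.1) - (boxMeasure n R).real (B p.1))
  have herr : Tendsto (fun R ↦ (1 - err R) / m) atTop (𝓝 (1 / m)) := by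
    have hzero : Tendsto err atTop (𝓝 0) := tendsto_sum_boxMeasure_real_vadd_sub _ _ _
    simpa using (hzero.const_sub 1).div_const (m : ℝ)
  refine density_le_of_tendsto herr (.of_forall fun R ↦ ?_)
  rw [le_div_iff₀ (by exact_mod_cast hm)]
  calc (boxMeasure n R).real (⋃ i, B i) * m
      ≤ (∑ i, (boxMeasure n R).real (B i)) * m := by
        gcongr
        exact measureReal_iUnion_fintype_le B
    _ = ∑ p ∈ Finset.univ.sigma K, (boxMeasure n R).real (B p.1) := by
        rw [mul_comm, Finset.mul_sum]
        simp only [Finset.sum_sigma, Finset.sum_const, hK, nsmul_eq_mul]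
    _ = ∑ p ∈ Finset.univ.sigma K, (boxMeasure n R).real (t p.2 +ᵥ B p.1) - err R := by
        simp [err, Finset.sum_sub_distrib]
    _ = (boxMeasure n R).real (⋃ p ∈ Finset.univ.sigma K, t p.2 +ᵥ B p.1) - err R := by
        rw [measureReal_biUnion_finset hdisj fun p _ ↦ (hB p.1).const_vadd (t p.2)]
    _ ≤ 1 - err R := by
        gcongr
        exact measureReal_le_one

theorem one_div_card_le_density_of_ae_mem_vadd {κ : Type*} [Fintype κ] {A : Set (Fin n → ℝ)}
    (t : κ → Fin n → ℝ) (hcover : ∀ᵐ x, ∃ k, x ∈ t k +ᵥ A) :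
    1 / (Fintype.card κ : ℝ) ≤ density n A := by
  have hcard : (0 : ℝ) < Fintype.card κ := by
    obtain ⟨x, k, -⟩ := hcover.exists
    exact_mod_cast Fintype.card_pos_iff.2 ⟨k⟩
  let err (R : ℝ) : ℝ := ∑ k, ((boxMeasure n R).real (t k +ᵥ A) - (boxMeasure n R).real A)
  have herr : Tendsto (fun R ↦ (1 - err R) / Fintype.card κ) atTop
      (𝓝 (1 / Fintype.card κ)) := by
    have hzero : Tendsto err atTop (𝓝 0) := tendsto_sum_boxMeasure_real_vadd_sub _ _ _
    simpa using (hzero.const_sub 1).div_const (Fintype.card κ : ℝ)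
  refine le_density_of_tendsto herr ?_
  filter_upwards [eventually_gt_atTop 0] with R hR
  have := isProbabilityMeasure_boxMeasure (n := n) hR
  have hfull : (boxMeasure n R).real (⋃ k, t k +ᵥ A) = 1 := by
    have hae : (⋃ k, t k +ᵥ A) =ᵐ[boxMeasure n R] univ :=
      eventuallyEq_univ.2 (ProbabilityTheory.cond_absolutelyContinuous.ae_le
        (hcover.mono fun x hx ↦ mem_iUnion.2 hx))
    rw [measureReal_congr hae, probReal_univ]
  rw [div_le_iff₀ hcard, sub_le_iff_le_add, ← hfull]
  calc (boxMeasure n R).real (⋃ k, t k +ᵥ A)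
      ≤ ∑ k, (boxMeasure n R).real (t k +ᵥ A) := measureReal_iUnion_fintype_le _
    _ = (boxMeasure n R).real A * Fintype.card κ + err R := by
        simp [err, Finset.sum_sub_distrib, mul_comm]

end Density

/-! ### Sets whose translates by partial sums form chains -/

section Chain

/-- The points `a ∈ A` such that `b` belongs to every nonempty `V` for which the translate
`∑_{i ∈ V} v i + a` lies in `A` again. -/
def anchored {ι G : Type*} [AddCommMonoid G] (v : ι → G) (A : Set G) (b : ι) : Set G :=
  {a ∈ A | ∀ V : Finset ι, V.Nonempty → ∑ i ∈ V, v i + a ∈ A → b ∈ V}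

section AddCommGroup

variable {ι G : Type*} [AddCommGroup G] {v : ι → G} {A : Set G}

-- The smallest `V` for which the translate of `a` by `∑_{i ∈ V} v i` returns to `A` is contained in
-- all others, and any of its elements serves as `b`.
theorem exists_mem_anchored [Fintype ι] [Nonempty ι] (hv : ∑ i, v i = 0)
    (hA : ∀ x, IsChain (· ≤ ·) {U : Finset ι | x ∈ (∑ i ∈ U, v i) +ᵥ A}) {a : G} (ha : a ∈ A) :
    ∃ b, a ∈ anchored v A b := by
  let returns : Set (Finset ι) := {V | V.Nonempty ∧ ∑ i ∈ V, v i + a ∈ A}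
  obtain ⟨V, ⟨⟨b, hb⟩, hVA⟩, hVmin⟩ := returns.toFinite.exists_minimal
    ⟨Finset.univ, Finset.univ_nonempty, by rwa [hv, zero_add]⟩
  refine ⟨b, ha, fun W hW hWA ↦ ?_⟩
  have hcomparable : V ≤ W ∨ W ≤ V :=
    (hA (∑ i ∈ V, v i + (∑ i ∈ W, v i + a))).total
      (vadd_mem_vadd_set hWA) (mem_vadd_set.2 ⟨_, hVA, add_left_comm _ _ _⟩)
  exact hcomparable.elim (· hb) fun h ↦ hVmin ⟨hW, hWA⟩ h hb

theorem eq_of_mem_vadd_anchored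
    (hA : ∀ x, IsChain (· ≤ ·) {U : Finset ι | x ∈ (∑ i ∈ U, v i) +ᵥ A})
    {b c : ι} {U V : Finset ι} (hb : b ∉ U) (hc : c ∉ V) {x : G}
    (hxU : x ∈ (∑ i ∈ U, v i) +ᵥ anchored v A b) (hxV : x ∈ (∑ i ∈ V, v i) +ᵥ anchored v A c) :
    U = V := by
  classical
  wlog hUV : U ≤ V generalizing U V b c
  · refine (this hc hb hxV hxU (((hA x).total ?_ ?_).resolve_left hUV)).symm
    · exact vadd_set_mono (sep_subset _ _) hxU
    · exact vadd_set_mono (sep_subset _ _) hxV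
  by_contra hne
  obtain ⟨a, ⟨haA, -⟩, rfl⟩ := hxU
  obtain ⟨a', ⟨-, ha'⟩, heq⟩ := hxV
  have hreturn : ∑ i ∈ V \ U, v i + a' = a := by
    simp only [vadd_eq_add, ← Finset.sum_sdiff hUV] at heq
    rw [add_right_comm, add_comm] at heq
    exact add_left_cancel heq
  have hcVU : c ∈ V \ U :=
    ha' _ (Finset.sdiff_nonempty.2 fun h ↦ hne (hUV.antisymm h)) (hreturn ▸ haA)
  exact hc (Finset.mem_sdiff.1 hcVU).1

end AddCommGroup

theorem measurableSet_anchored {ι G : Type*} [Countable ι] [AddCommMonoid G] [MeasurableSpace G]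
    [MeasurableAdd G] (v : ι → G) {A : Set G} (hA : MeasurableSet A) (b : ι) :
    MeasurableSet (anchored v A b) := by
  simp only [anchored, ofPred_and, ofPred_forall]
  exact hA.inter <| .iInter fun V ↦ .iInter fun _ ↦
    .imp ((measurable_const_add _) hA) (.const _)

theorem density_le_of_isChain {n m : ℕ} {v : Fin (m + 1) → Fin n → ℝ} (hv : ∑ i, v i = 0)
    {A : Set (Fin n → ℝ)} (hAm : MeasurableSet A)
    (hA : ∀ x, IsChain (· ≤ ·) {U : Finset (Fin (m + 1)) | x ∈ (∑ i ∈ U, v i) +ᵥ A}) :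
    density n A ≤ 1 / 2 ^ m := by
  let B := disjointed (anchored v A)
  have hBsub (b : Fin (m + 1)) : B b ⊆ anchored v A b := disjointed_subset _ b
  have hBm (b : Fin (m + 1)) : MeasurableSet (B b) :=
    disjointedRec (fun _ c ht ↦ ht.diff (measurableSet_anchored v hAm c))
      (measurableSet_anchored v hAm b)
  have hBunion : ⋃ b, B b = A := by
    rw [iUnion_disjointed]
    exact (iUnion_subset fun b ↦ sep_subset _ _).antisymm
      fun a ha ↦ mem_iUnion.2 (exists_mem_anchored hv hA ha)
  let K (b : Fin (m + 1)) : Finset (Finset (Fin (m + 1))) := (Finset.univ.erase b).powerset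
  have hmemK {b U} (h : U ∈ K b) : b ∉ U := fun hb ↦ by
    simpa using Finset.mem_powerset.1 h hb
  have hK (b : Fin (m + 1)) : (K b).card = 2 ^ m := by
    simp [K, Finset.card_powerset]
  have hdisj :
      (Finset.univ.sigma K : Set (Σ _ : Fin (m + 1), Finset (Fin (m + 1)))).PairwiseDisjoint fun p ↦
        (∑ i ∈ p.2, v i) +ᵥ B p.1 := by
    rintro ⟨b, U⟩ hbU ⟨c, V⟩ hcV hne
    rw [Function.onFun, Set.disjoint_left]
    intro x hxU hxV
    obtain rfl : U = V := eq_of_mem_vadd_anchored hA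
      (hmemK (Finset.mem_sigma.1 hbU).2) (hmemK (Finset.mem_sigma.1 hcV).2)
      (vadd_set_mono (hBsub b) hxU) (vadd_set_mono (hBsub c) hxV)
    obtain ⟨a, hab, rfl⟩ := hxU
    have hac : a ∈ B c := vadd_mem_vadd_set_iff.1 hxV
    obtain rfl : b = c := by
      by_contra hbc
      exact Set.disjoint_left.1 (disjoint_disjointed (anchored v A) hbc) hab hac
    exact hne rfl
  simpa [hBunion] using
    density_iUnion_le_one_div_of_pairwiseDisjoint hBm (fun U ↦ ∑ i ∈ U, v i)
      (Nat.two_pow_pos m) hK hdisj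

end Chain

/-! ### The two bounds -/

section Hyperplane

theorem exists_map_eq_sum_eq_zero {ι G H : Type*} [Fintype ι] [Nonempty ι] [AddCommGroup G]
    [AddCommGroup H] (f : G →+ H) {y : ι → H} (hy : ∀ i, y i ∈ range f) (hsum : ∑ i, y i = 0) :
    ∃ v : ι → G, (∀ i, f (v i) = y i) ∧ ∑ i, v i = 0 := by
  classical
  choose u hu using hy
  have hker : f (∑ i, u i) = 0 := by simp [hu, hsum]
  refine ⟨u - Pi.single (Classical.arbitrary ι) (∑ i, u i), fun i ↦ ?_, ?_⟩
  · rw [Pi.sub_apply, map_sub, hu, Pi.apply_single (fun _ ↦ f) (fun _ ↦ map_zero f), hker]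
    simp
  · simp [Finset.sum_sub_distrib]

variable {n : ℕ} {e : (Fin n → ℝ) →ₗ[ℝ] (Fin (n + 1) → ℝ)}

theorem exists_map_sum_eq_half_indicator_sub_const (hrange : range e = Hset n) :
    ∃ v : Fin (n + 1) → Fin n → ℝ, ∑ k, v k = 0 ∧ ∀ U : Finset (Fin (n + 1)), ∃ c : ℝ,
      e (∑ k ∈ U, v k) = fun i ↦ (if i ∈ U then 1 / 2 else 0) - c := by
  let c : ℝ := 1 / (2 * (n + 1))
  let y (k i : Fin (n + 1)) : ℝ := (if i = k then 1 / 2 else 0) - c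
  have hn : (n + 1 : ℝ) * c = 1 / 2 := by
    simp only [c]
    field_simp
  have hy (k : Fin (n + 1)) : y k ∈ range e.toAddMonoidHom := by
    refine hrange.ge (show ∑ i, y k i = 0 from ?_)
    simp [y, Finset.sum_sub_distrib, hn]
  have hsum : ∑ k, y k = 0 := by
    ext i
    simp [y, Finset.sum_apply, Finset.sum_sub_distrib, hn]
  obtain ⟨v, hv, hv₀⟩ := exists_map_eq_sum_eq_zero e.toAddMonoidHom hy hsum
  refine ⟨v, hv₀, fun U ↦ ⟨U.card * c, ?_⟩⟩
  have hev (k : Fin (n + 1)) : e (v k) = y k := hv k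
  ext i
  simp [hev, y, Finset.sum_apply, Finset.sum_sub_distrib]

theorem density_le_of_avoidsOne_osc (hrange : range e = Hset n) {A : Set (Fin n → ℝ)}
    (hAm : MeasurableSet A) (hA : AvoidsOne n (fun x ↦ osc (e x)) A) :
    density n A ≤ 1 / 2 ^ n := by
  obtain ⟨v, hv, hev⟩ := exists_map_sum_eq_half_indicator_sub_const hrange
  refine density_le_of_isChain hv hAm fun x U hU V hV _ ↦ ?_
  obtain ⟨a, ha, rfl⟩ := hU
  obtain ⟨a', ha', heq⟩ := hV
  by_contra! hincomparable
  refine hA a ha a' ha' ?_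
  obtain ⟨c, hc⟩ := hev V
  obtain ⟨d, hd⟩ := hev U
  have hsub : a - a' = ∑ i ∈ V, v i - ∑ i ∈ U, v i := by
    rw [sub_eq_sub_iff_add_eq_add, add_comm a, add_comm _ a']
    exact heq.symm.trans (add_comm _ _)
  have hmap : e (a - a')
      = fun i ↦ (if i ∈ V then 1 / 2 else 0) - (if i ∈ U then 1 / 2 else 0) + (d - c) := by
    rw [hsub, map_sub, hc, hd]
    ext i
    simp only [Pi.sub_apply]
    ring
  change osc (e (a - a')) = 1
  rw [hmap]
  exact osc_half_indicator_sub_eq_one hincomparable.2 hincomparable.1 _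

theorem ae_mul_sub_notMem_range_intCast (hrange : range e = Hset n) {i j : Fin (n + 1)}
    (hij : i ≠ j) : ∀ᵐ x, 2 * (e x i - e x j) ∉ range ((↑) : ℤ → ℝ) := by
  let L : (Fin n → ℝ) →ₗ[ℝ] ℝ := (2 : ℝ) • ((.proj i - .proj j) ∘ₗ e)
  have hL : L ≠ 0 := by
    obtain ⟨x, hx⟩ := hrange.ge (show Pi.single i 1 - Pi.single j 1 ∈ Hset n by
      simp [Hset, Finset.sum_sub_distrib])
    refine fun h ↦ ?_
    have hLx : L x = 4 := by
      simp [L, hx, hij, hij.symm]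
      norm_num
    simp [h] at hLx
  have hcount : (range ((↑) : ℤ → ℝ)).Countable := countable_range _
  exact (ae_comp_linearMap_mem_iff L volume volume (LinearMap.surjective hL)
    hcount.measurableSet.compl).2 (hcount.ae_notMem volume)

theorem one_div_two_pow_le_density_preimage_halfCells (hrange : range e = Hset n) :
    1 / 2 ^ n ≤ density n (e ⁻¹' halfCells (Fin (n + 1))) := by
  have hpre (U : Finset (Fin n)) :
      ∃ t, e t = (1 / 2 : ℝ) • fun i ↦ (parityVec U i : ℝ) := by
    refine hrange.ge (show ∑ i, ((1 / 2 : ℝ) • fun i ↦ (parityVec U i : ℝ)) i = 0 from ?_)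
    simp only [Pi.smul_apply, ← Finset.smul_sum]
    rw [← Int.cast_sum, sum_parityVec, Int.cast_zero, smul_zero]
  choose t ht using hpre
  have hcover : ∀ᵐ x, ∃ U, x ∈ t U +ᵥ e ⁻¹' halfCells (Fin (n + 1)) := by
    have hgen : ∀ᵐ x, ∀ i j, i ≠ j → 2 * (e x i - e x j) ∉ range ((↑) : ℤ → ℝ) :=
      ae_all_iff.2 fun i ↦ ae_all_iff.2 fun j ↦ ae_all_iff.2 fun hij ↦
        ae_mul_sub_notMem_range_intCast hrange hij
    filter_upwards [hgen] with x hx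
    obtain ⟨U, hU⟩ := exists_sub_half_parityVec_mem_halfCells (hrange.le (mem_range_self x)) hx
    refine ⟨U, mem_vadd_set.2 ⟨x - t U, ?_, add_sub_cancel _ _⟩⟩
    rwa [mem_preimage, map_sub, ht]
  simpa using one_div_card_le_density_of_ae_mem_vadd t hcover

theorem avoidsOne_preimage_halfCells :
    AvoidsOne n (fun x ↦ osc (e x)) (e ⁻¹' halfCells (Fin (n + 1))) := fun x hx y hy ↦ by
  simpa only [map_sub] using osc_sub_ne_one_of_mem_halfCells hx hy

theorem m1_voronoi_An_general (hrange : range e = Hset n) :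
    m1 n (fun x ↦ (⨆ i, e x i) - (⨅ i, e x i)) = 1 / 2 ^ n := by
  let A := e ⁻¹' halfCells (Fin (n + 1))
  have hAm : MeasurableSet A :=
    (LinearMap.continuous_of_finiteDimensional e).measurable measurableSet_halfCells
  have hA : AvoidsOne n (fun x ↦ osc (e x)) A := avoidsOne_preimage_halfCells
  have hdensity : 1 / 2 ^ n = density n A :=
    (one_div_two_pow_le_density_preimage_halfCells hrange).antisymm
      (density_le_of_avoidsOne_osc hrange hAm hA)
  refine IsGreatest.csSup_eq ⟨⟨A, hAm, hA, hdensity⟩, ?_⟩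
  rintro _ ⟨A', hAm', hA', rfl⟩
  exact density_le_of_avoidsOne_osc hrange hAm' hA'

end Hyperplane

/-- `m₁` for the Voronoï region of `Aₙ`: computed on `ℝⁿ` transported through any
linear isometric identification `e` of `ℝⁿ` with the hyperplane `H`; the norm of
`x` is `max_j (e x)_j - min_i (e x)_i`, which is the norm whose unit ball is the
Voronoï region of `Aₙ`. -/
theorem m1_voronoi_An (n : ℕ) (hn : 2 ≤ n)
    (e : (Fin n → ℝ) →ₗ[ℝ] (Fin (n + 1) → ℝ))
    (hrange : Set.range e = Hset n)
    (hiso : ∀ x y : Fin n → ℝ, ∑ i, e x i * e y i = ∑ i, x i * y i) :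
    m1 n (fun x => (⨆ i, e x i) - (⨅ i, e x i)) = 1 / 2 ^ n :=
  m1_voronoi_An_general hrange
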